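/- A tree T with independence number α has exactly 2^(α−1) + 1 maximum independent sets if and only if T arises by subdividing α−1 edges of a star of order α+1 once (that is, T is isomorphic to T(α−1), the tree obtained from a star with center c and α leaves by subdividing α−1 of its edges once). -/

import Mathlib

/-- `S` is an independent set of `G`: pairwise non-adjacent vertices. -/
def IndepSetOf {V : Type*} (G : SimpleGraph V) (S : Set V) : Prop :=
  S.Pairwise fun a b => ¬ G.Adj a b

/-- The independence number of `G`: the maximum cardinality of an independent set. -/
noncomputable def indepN {V : Type*} (G : SimpleGraph V) : ℕ :=
  sSup {n | ∃ S : Set V, IndepSetOf G S ∧ S.ncard = n}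

/-- `S` is a maximum independent set of `G`. -/
def MaxIndepSet {V : Type*} (G : SimpleGraph V) (S : Set V) : Prop :=
  IndepSetOf G S ∧ S.ncard = indepN G

/-- The number of maximum independent sets of `G`. -/
noncomputable def numMaxIndepSets {V : Type*} (G : SimpleGraph V) : ℕ :=
  {S : Set V | MaxIndepSet G S}.ncard

/-- `TkGraph k` is the tree `T(k)` obtained from a star with center `c` of order `k+2`
(center plus `k+1` leaves) by subdividing `k` of its edges once.
Vertices: the center `Sum.inl ()`, one pendant leaf `Sum.inr (Sum.inl ())`,
the subdivision vertices `v i = Sum.inr (Sum.inr (Sum.inl i))`, and the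
endvertices `u i = Sum.inr (Sum.inr (Sum.inr i))`. -/
def TkGraph (k : ℕ) : SimpleGraph (Unit ⊕ Unit ⊕ Fin k ⊕ Fin k) :=
  SimpleGraph.fromRel fun a b =>
    (a = Sum.inl () ∧ b = Sum.inr (Sum.inl ())) ∨
    (∃ i : Fin k, a = Sum.inl () ∧ b = Sum.inr (Sum.inr (Sum.inl i))) ∨
    (∃ i : Fin k, a = Sum.inr (Sum.inr (Sum.inl i)) ∧ b = Sum.inr (Sum.inr (Sum.inr i)))

/-!
For a maximum independent set `S`, a maximum independent set `T` is determined by `T \ S`, so there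
are at most `2 ^ (n - α)` of them. Hence `2 ^ (α - 1) + 1` of them force `2 * α ≤ n`, and if the
graph is bipartite, Hall's theorem provides a perfect matching. Writing `i` and `i'` for matched
vertices on the two sides, the graph is described by the reflexive relation `i ~ j'` on one side,
that is, by a digraph, and its maximum independent sets correspond to the sets of vertices that no
arc leaves.

The complement of such a closed set is a set that no arc enters, and by connectivity only `∅` and
the whole vertex set are of both kinds. So there are at most `2 ^ (α - 1) + 1` closed sets, with
equality if and only if every set of vertices or its complement is closed. This means that any two
arcs share their source or their target, hence that the digraph is a star directed away from or
towards its center; the graph of such a star is `T(α - 1)`.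
-/

theorem ncard_preimage_of_bijective {V W : Type*} {f : V → W} (S : Set W) (hf : f.Bijective) :
    (f ⁻¹' S).ncard = S.ncard :=
  congrArg ENat.toNat (Set.encard_preimage_of_bijective hf S)

section IndepSet

variable {V W : Type*} {G : SimpleGraph V} {H : SimpleGraph W}

theorem IndepSetOf.not_adj {S : Set V} (hS : IndepSetOf G S) {u v : V} (hu : u ∈ S)
    (hv : v ∈ S) : ¬ G.Adj u v :=
  fun huv => hS hu hv huv.ne huv

theorem indepSetOf_iff {S : Set V} :
    IndepSetOf G S ↔ ∀ u v, u ∈ S → v ∈ S → ¬ G.Adj u v :=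
  ⟨fun h _ _ hu hv => h.not_adj hu hv, fun h u hu v hv _ => h u v hu hv⟩

theorem IndepSetOf.mono {S T : Set V} (hT : IndepSetOf G T) (hST : S ⊆ T) : IndepSetOf G S :=
  Set.Pairwise.mono hST hT

theorem indepSetOf_union {S T : Set V} (hS : IndepSetOf G S) (hT : IndepSetOf G T)
    (hST : ∀ u ∈ S, ∀ v ∈ T, ¬ G.Adj u v) : IndepSetOf G (S ∪ T) := by
  rw [indepSetOf_iff]
  rintro u v (hu | hu) (hv | hv) huv
  · exact hS.not_adj hu hv huv
  · exact hST u hu v hv huv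
  · exact hST v hv u hu huv.symm
  · exact hT.not_adj hu hv huv

theorem bddAbove_ncard_indepSetOf [Finite V] (G : SimpleGraph V) :
    BddAbove {n | ∃ S : Set V, IndepSetOf G S ∧ S.ncard = n} := by
  refine ⟨Nat.card V, ?_⟩
  rintro _ ⟨S, -, rfl⟩
  exact Set.ncard_le_card S

theorem IndepSetOf.ncard_le_indepN [Finite V] {S : Set V} (hS : IndepSetOf G S) :
    S.ncard ≤ indepN G :=
  le_csSup (bddAbove_ncard_indepSetOf G) ⟨S, hS, rfl⟩

theorem exists_maxIndepSet [Finite V] (G : SimpleGraph V) : ∃ S, MaxIndepSet G S :=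
  Nat.sSup_mem (s := {n | ∃ S : Set V, IndepSetOf G S ∧ S.ncard = n})
    ⟨0, ∅, Set.pairwise_empty _, Set.ncard_empty V⟩ (bddAbove_ncard_indepSetOf G)

theorem MaxIndepSet.eq_of_union [Finite V] {S T : Set V} (hS : MaxIndepSet G S)
    (hT : MaxIndepSet G T) (hST : IndepSetOf G (S ∪ T)) : S = T := by
  have hle := hST.ncard_le_indepN
  have hSu := Set.eq_of_subset_of_ncard_le Set.subset_union_left (hle.trans hS.2.ge)
  have hTu := Set.eq_of_subset_of_ncard_le Set.subset_union_right (hle.trans hT.2.ge)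
  exact hSu.trans hTu.symm

theorem MaxIndepSet.eq_of_sdiff_eq [Finite V] {S T U : Set V} (hT : MaxIndepSet G T)
    (hU : MaxIndepSet G U) (hS : IndepSetOf G S) (h : T \ S = U \ S) : T = U := by
  have hcross : ∀ t ∈ T, ∀ u ∈ U, ¬ G.Adj t u := by
    intro t ht u hu
    by_cases htS : t ∈ S
    · by_cases huS : u ∈ S
      · exact hS.not_adj htS huS
      · exact hT.1.not_adj ht (h.ge ⟨hu, huS⟩).1
    · exact hU.1.not_adj (h.le ⟨ht, htS⟩).1 hu
  exact hT.eq_of_union hU (indepSetOf_union hT.1 hU.1 hcross)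

theorem numMaxIndepSets_le_two_pow [Finite V] (G : SimpleGraph V) :
    numMaxIndepSets G ≤ 2 ^ (Nat.card V - indepN G) := by
  obtain ⟨S, hS⟩ := exists_maxIndepSet G
  have hcompl : Sᶜ.ncard = Nat.card V - indepN G := by
    rw [← hS.2, ← Set.ncard_add_ncard_compl S, Nat.add_sub_cancel_left]
  rw [← hcompl, ← Set.ncard_powerset]
  exact Set.ncard_le_ncard_of_injOn (fun T => T \ S) (fun T _ v hv => hv.2)
    fun T hT U hU h => MaxIndepSet.eq_of_sdiff_eq hT hU hS.1 h

theorem two_mul_indepN_le_card_of_two_pow_lt [Finite V]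
    (h : 2 ^ (indepN G - 1) < numMaxIndepSets G) : 2 * indepN G ≤ Nat.card V := by
  have hlt := (Nat.pow_lt_pow_iff_right one_lt_two).mp (h.trans_le (numMaxIndepSets_le_two_pow G))
  omega

theorem indepSetOf_preimage_iff (e : G ≃g H) {S : Set W} :
    IndepSetOf G (e ⁻¹' S) ↔ IndepSetOf H S := by
  rw [indepSetOf_iff, indepSetOf_iff, e.surjective.forall₂]
  simp only [Set.mem_preimage, e.map_adj_iff]

theorem indepN_congr (e : G ≃g H) : indepN G = indepN H := by
  refine congrArg sSup (Set.ext fun n => ?_)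
  refine ((Set.preimage_surjective.mpr e.injective).exists).trans (exists_congr fun S => ?_)
  rw [indepSetOf_preimage_iff, ncard_preimage_of_bijective _ e.bijective]

theorem maxIndepSet_preimage_iff (e : G ≃g H) {S : Set W} :
    MaxIndepSet G (e ⁻¹' S) ↔ MaxIndepSet H S := by
  rw [MaxIndepSet, MaxIndepSet, indepSetOf_preimage_iff, indepN_congr e,
    ncard_preimage_of_bijective _ e.bijective]

theorem numMaxIndepSets_congr (e : G ≃g H) : numMaxIndepSets G = numMaxIndepSets H := by
  refine (Set.ncard_congr (fun S _ => e ⁻¹' S) (fun S hS => (maxIndepSet_preimage_iff e).mpr hS)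
    (fun S T _ _ h => e.surjective.preimage_injective h) fun S hS => ?_).symm
  obtain ⟨T, rfl⟩ := Set.preimage_surjective.mpr e.injective S
  exact ⟨T, (maxIndepSet_preimage_iff e).mp hS, rfl⟩

end IndepSet

section Relation

variable {ι : Type*} {D : ι → ι → Prop}

/-- A set of vertices of the digraph with arc relation `D` is closed if no arc leaves it. -/
def RelClosed (D : ι → ι → Prop) (X : Set ι) : Prop :=
  ∀ ⦃i j⦄, D i j → i ∈ X → j ∈ X

/-- Weak connectivity of the digraph with arc relation `D`, expressed by cuts: every proper
nonempty set of vertices is entered or left by an arc. -/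
def IsWeaklyConnected (D : ι → ι → Prop) : Prop :=
  ∀ X, RelClosed D X → RelClosed D Xᶜ → X = ∅ ∨ X = Set.univ

/-- The reflexive relation whose arcs, loops aside, form a star directed away from `c` and
spanning the whole type. -/
def starRel (c : ι) (i j : ι) : Prop :=
  i = j ∨ i = c

theorem relClosed_flip_iff {X : Set ι} : RelClosed (flip D) X ↔ RelClosed D Xᶜ :=
  ⟨fun h _ _ hij hi hj => hi (h hij hj), fun h _ _ hij hi => by_contra fun hj => h hij hj hi⟩

theorem IsWeaklyConnected.flip (hD : IsWeaklyConnected D) : IsWeaklyConnected (flip D) :=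
  fun X hX hXc => hD X (compl_compl X ▸ relClosed_flip_iff.mp hXc) (relClosed_flip_iff.mp hX)

instance (c : ι) : Std.Refl (starRel c) :=
  ⟨fun _ => Or.inl rfl⟩

theorem isWeaklyConnected_starRel (c : ι) : IsWeaklyConnected (starRel c) := by
  intro X hX hXc
  by_cases hc : c ∈ X
  · exact Or.inr (Set.eq_univ_of_forall fun i => hX (Or.inr rfl) hc)
  · exact Or.inl (Set.eq_empty_of_forall_notMem fun i => hXc (Or.inr rfl) hc)

theorem two_mul_ncard_relClosed [Finite ι] [Nonempty ι] (hD : IsWeaklyConnected D) :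
    2 * {X | RelClosed D X}.ncard = {X | RelClosed D X ∨ RelClosed D Xᶜ}.ncard + 2 := by
  set C : Set (Set ι) := {X | RelClosed D X}
  have hinter : C ∩ compl ⁻¹' C = {∅, Set.univ} := by
    refine Set.Subset.antisymm (fun X hX => hD X hX.1 hX.2) ?_
    rintro X (rfl | rfl) <;> simp [C, RelClosed]
  have hcompl : (compl ⁻¹' C).ncard = C.ncard := ncard_preimage_of_bijective C compl_bijective
  have hcard := Set.ncard_union_add_ncard_inter C (compl ⁻¹' C)
  rw [hinter, Set.ncard_pair Set.empty_ne_univ, hcompl, ← two_mul] at hcard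
  exact hcard.symm

theorem ncard_relClosed_eq_iff_forall [Finite ι] [Nonempty ι] (hD : IsWeaklyConnected D) :
    {X | RelClosed D X}.ncard = 2 ^ (Nat.card ι - 1) + 1 ↔
      ∀ X, RelClosed D X ∨ RelClosed D Xᶜ := by
  have hcount := two_mul_ncard_relClosed hD
  have hpow : 2 * 2 ^ (Nat.card ι - 1) = (Set.univ : Set (Set ι)).ncard := by
    rw [mul_pow_sub_one Nat.card_pos.ne', ← Set.powerset_univ, Set.ncard_powerset, Set.ncard_univ]
  calc {X | RelClosed D X}.ncard = 2 ^ (Nat.card ι - 1) + 1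
    _ ↔ {X | RelClosed D X ∨ RelClosed D Xᶜ}.ncard = (Set.univ : Set (Set ι)).ncard := by omega
    _ ↔ {X | RelClosed D X ∨ RelClosed D Xᶜ} = Set.univ :=
      ⟨fun h => Set.eq_of_subset_of_ncard_le (Set.subset_univ _) h.ge, congrArg Set.ncard⟩
    _ ↔ ∀ X, RelClosed D X ∨ RelClosed D Xᶜ := Set.eq_univ_iff_forall

theorem forall_relClosed_or_compl_iff :
    (∀ X, RelClosed D X ∨ RelClosed D Xᶜ) ↔
      ∀ ⦃i j k l⦄, D i j → i ≠ j → D k l → k ≠ l → i = k ∨ j = l := by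
  constructor
  · intro h i j k l hij hne hkl hne'
    -- Unless `i = k` or `j = l`, the set `{i, l}` is left by the first arc, entered by the second.
    rcases h {i, l} with hX | hX
    · right
      simpa [hne.symm] using hX hij (Set.mem_insert i {l})
    · left
      by_contra hik
      exact hX hkl (by simp [Ne.symm hik, hne']) (by simp)
  · intro h X
    by_contra! hX
    simp only [RelClosed, not_forall, Set.mem_compl_iff, not_not] at hX
    obtain ⟨⟨i, j, hij, hi, hj⟩, k, l, hkl, hk, hl⟩ := hX
    rcases h hij (ne_of_mem_of_not_mem hi hj) hkl (ne_of_mem_of_not_mem hl hk).symm with rfl | rfl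
    · exact hk hi
    · exact hj hl

theorem exists_common_source_or_target [Nonempty ι]
    (h : ∀ ⦃i j k l⦄, D i j → i ≠ j → D k l → k ≠ l → i = k ∨ j = l) :
    ∃ c, (∀ i j, D i j → i ≠ j → i = c) ∨ ∀ i j, D i j → i ≠ j → j = c := by
  by_contra! hcon
  obtain ⟨i, j, hij, hne, -⟩ := (hcon (Classical.arbitrary ι)).1
  obtain ⟨k, l, hkl, hkl', hki⟩ := (hcon i).1
  obtain ⟨p, q, hpq, hpq', hqj⟩ := (hcon j).2
  have hjl : j = l := (h hij hne hkl hkl').resolve_left hki.symm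
  have hip : i = p := (h hij hne hpq hpq').resolve_right hqj.symm
  rcases h hkl hkl' hpq hpq' with hkp | hlq
  · exact hki (hkp.trans hip.symm)
  · exact hqj (hlq.symm.trans hjl.symm)

theorem eq_starRel_of_common_source [Std.Refl D] (hD : IsWeaklyConnected D) {c : ι}
    (hc : ∀ i j, D i j → i ≠ j → i = c) : D = starRel c := by
  have hcj : ∀ j, D c j := by
    intro j
    by_contra hcj
    have hjc : c ≠ j := fun h => hcj (h ▸ refl c)
    have hout : RelClosed D {j} := by
      rintro _ l hjl rfl
      by_contra hl
      exact hjc (hc _ l hjl (Ne.symm hl)).symm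
    have hin : RelClosed D {j}ᶜ := by
      rintro k _ hkj hk rfl
      exact hcj (hc k _ hkj hk ▸ hkj)
    rcases hD {j} hout hin with h | h
    · exact Set.singleton_ne_empty j h
    · exact hjc (h.ge (Set.mem_univ c))
  ext i j
  constructor
  · exact fun hij => or_iff_not_imp_left.mpr (hc i j hij)
  · rintro (rfl | rfl)
    exacts [refl i, hcj j]

theorem ncard_relClosed_eq_iff_exists_starRel [Finite ι] [Nonempty ι] [Std.Refl D]
    (hD : IsWeaklyConnected D) :
    {X | RelClosed D X}.ncard = 2 ^ (Nat.card ι - 1) + 1 ↔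
      ∃ c, D = starRel c ∨ D = flip (starRel c) := by
  rw [ncard_relClosed_eq_iff_forall hD, forall_relClosed_or_compl_iff]
  constructor
  · intro h
    obtain ⟨c, hc | hc⟩ := exists_common_source_or_target h
    · exact ⟨c, Or.inl (eq_starRel_of_common_source hD hc)⟩
    · have : Std.Refl (flip D) := ⟨fun i => refl_of D i⟩
      have hflip := eq_starRel_of_common_source hD.flip fun i j hji hij => hc j i hji hij.symm
      exact ⟨c, Or.inr (congrArg flip hflip)⟩
  · rintro ⟨c, rfl | rfl⟩ i j k l hij hne hkl hne'
    · exact Or.inl ((hij.resolve_left hne).trans (hkl.resolve_left hne').symm)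
    · exact Or.inr ((hij.resolve_left hne.symm).trans (hkl.resolve_left hne'.symm).symm)

end Relation

section Biadjacency

variable {ι κ : Type*}

/-- The bipartite graph with biadjacency relation `D`. For a relation on a single type this is the
bipartite double of a digraph, and reflexivity of `D` says that the edges
`s(Sum.inl i, Sum.inr i)` form a perfect matching. -/
def biadjGraph (D : ι → κ → Prop) : SimpleGraph (ι ⊕ κ) where
  Adj
    | Sum.inl i, Sum.inr j | Sum.inr j, Sum.inl i => D i j
    | Sum.inl _, Sum.inl _ | Sum.inr _, Sum.inr _ => False
  symm := ⟨by rintro (i | i) (j | j) h <;> exact h⟩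
  loopless := ⟨by rintro (i | i) h <;> exact h⟩

theorem indepSetOf_biadjGraph_iff {D : ι → κ → Prop} {X : Set ι} {Y : Set κ} :
    IndepSetOf (biadjGraph D) (Set.sumEquiv.symm (X, Y)) ↔ ∀ i ∈ X, ∀ j ∈ Y, ¬ D i j := by
  rw [indepSetOf_iff]
  constructor
  · exact fun h i hi j hj hij => h (Sum.inl i) (Sum.inr j) (by simpa) (by simpa) hij
  · rintro h (i | i) (j | j) hi hj hij
    exacts [hij, h i (by simpa using hi) j (by simpa using hj) hij,
      h j (by simpa using hj) i (by simpa using hi) hij, hij]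

theorem ncard_sumEquiv_symm [Finite ι] [Finite κ] (X : Set ι) (Y : Set κ) :
    (Set.sumEquiv.symm (X, Y)).ncard = X.ncard + Y.ncard := by
  rw [Set.sumEquiv_symm_apply, Set.ncard_union_eq Set.disjoint_image_inl_image_inr,
    Set.ncard_image_of_injective _ Sum.inl_injective,
    Set.ncard_image_of_injective _ Sum.inr_injective]

variable {D : ι → ι → Prop}

theorem disjoint_of_indepSetOf_biadjGraph [Std.Refl D] {X Y : Set ι}
    (h : IndepSetOf (biadjGraph D) (Set.sumEquiv.symm (X, Y))) : Disjoint X Y :=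
  Set.disjoint_left.mpr fun i hiX hiY => indepSetOf_biadjGraph_iff.mp h i hiX i hiY (refl i)

theorem indepSetOf_biadjGraph_compl_iff {X : Set ι} :
    IndepSetOf (biadjGraph D) (Set.sumEquiv.symm (X, Xᶜ)) ↔ RelClosed D X := by
  rw [indepSetOf_biadjGraph_iff]
  exact ⟨fun h i j hij hi => by_contra fun hj => h i hi j hj hij,
    fun h i hi j hj hij => hj (h hij hi)⟩

variable [Finite ι]

theorem indepN_biadjGraph [Std.Refl D] : indepN (biadjGraph D) = Nat.card ι := by
  apply le_antisymm
  · obtain ⟨S, hS, hcard⟩ := exists_maxIndepSet (biadjGraph D)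
    obtain ⟨⟨X, Y⟩, rfl⟩ := Set.sumEquiv.symm.surjective S
    rw [← hcard, ncard_sumEquiv_symm, ← Set.ncard_union_eq (disjoint_of_indepSetOf_biadjGraph hS)]
    exact Set.ncard_le_card _
  · have huniv : IndepSetOf (biadjGraph D) (Set.sumEquiv.symm (Set.univ, ∅)) := by
      rw [indepSetOf_biadjGraph_iff]
      simp
    rw [← Set.ncard_univ, ← Nat.add_zero Set.univ.ncard, ← Set.ncard_empty ι,
      ← ncard_sumEquiv_symm]
    exact huniv.ncard_le_indepN

theorem maxIndepSet_biadjGraph_iff [Std.Refl D] {S : Set (ι ⊕ ι)} :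
    MaxIndepSet (biadjGraph D) S ↔ ∃ X, RelClosed D X ∧ Set.sumEquiv.symm (X, Xᶜ) = S := by
  constructor
  · rintro ⟨hS, hcard⟩
    obtain ⟨⟨X, Y⟩, rfl⟩ := Set.sumEquiv.symm.surjective S
    have hdisj := disjoint_of_indepSetOf_biadjGraph hS
    rw [indepN_biadjGraph, ncard_sumEquiv_symm, ← Set.ncard_add_ncard_compl X,
      Nat.add_left_cancel_iff] at hcard
    obtain rfl : Y = Xᶜ := Set.eq_of_subset_of_ncard_le hdisj.subset_compl_left hcard.ge
    exact ⟨X, indepSetOf_biadjGraph_compl_iff.mp hS, rfl⟩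
  · rintro ⟨X, hX, rfl⟩
    refine ⟨indepSetOf_biadjGraph_compl_iff.mpr hX, ?_⟩
    rw [ncard_sumEquiv_symm, Set.ncard_add_ncard_compl, indepN_biadjGraph]

theorem numMaxIndepSets_biadjGraph [Std.Refl D] :
    numMaxIndepSets (biadjGraph D) = {X | RelClosed D X}.ncard := by
  have himage : {S | MaxIndepSet (biadjGraph D) S} =
      (fun X => Set.sumEquiv.symm (X, Xᶜ)) '' {X | RelClosed D X} :=
    Set.ext fun _ => maxIndepSet_biadjGraph_iff
  rw [numMaxIndepSets, himage]
  exact Set.ncard_image_of_injective _ fun X Y h =>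
    congrArg Prod.fst (Set.sumEquiv.symm.injective h)

end Biadjacency

section Isomorphism

variable {ι κ : Type*}

theorem isWeaklyConnected_of_connected_biadjGraph {D : ι → ι → Prop}
    (h : (biadjGraph D).Connected) : IsWeaklyConnected D := by
  intro X hX hXc
  by_contra! hne
  obtain ⟨⟨i, hi⟩, hX_ne⟩ := hne
  obtain ⟨j, hj⟩ := (Set.ne_univ_iff_exists_notMem X).mp hX_ne
  obtain ⟨p⟩ := h.preconnected (Sum.inl i) (Sum.inl j)
  obtain ⟨⟨⟨u, v⟩, huv⟩, -, hu, hv⟩ := p.exists_boundary_dart (Sum.elim id id ⁻¹' X) hi hj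
  rcases u with u | u <;> rcases v with v | v
  · exact huv
  · exact hv (hX huv hu)
  · exact hXc huv hv hu
  · exact huv

/-- Transposing a biadjacency relation exchanges the two sides of the graph. -/
def biadjGraphFlipIso (D : ι → κ → Prop) : biadjGraph (flip D) ≃g biadjGraph D where
  toEquiv := Equiv.sumComm κ ι
  map_rel_iff' := by rintro (i | i) (j | j) <;> rfl

/-- The graphs of stars on types of the same size are isomorphic. -/
def starRelIso {c : ι} {d : κ} (e : ι ≃ κ) (h : e c = d) :
    biadjGraph (starRel c) ≃g biadjGraph (starRel d) where
  toEquiv := Equiv.sumCongr e e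
  map_rel_iff' := by
    subst h
    rintro (i | i) (j | j) <;> simp [biadjGraph, starRel]

/-- `T(k)` as the graph of a star: the center and the endvertices form the left side. -/
def tkGraphIso (k : ℕ) : TkGraph k ≃g biadjGraph (starRel (none : Option (Fin k))) where
  toFun
    | Sum.inl _ => Sum.inl none
    | Sum.inr (Sum.inl _) => Sum.inr none
    | Sum.inr (Sum.inr (Sum.inl i)) => Sum.inr (some i)
    | Sum.inr (Sum.inr (Sum.inr i)) => Sum.inl (some i)
  invFun
    | Sum.inl none => Sum.inl ()
    | Sum.inr none => Sum.inr (Sum.inl ())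
    | Sum.inr (some i) => Sum.inr (Sum.inr (Sum.inl i))
    | Sum.inl (some i) => Sum.inr (Sum.inr (Sum.inr i))
  left_inv := by rintro (_ | _ | _ | _) <;> rfl
  right_inv := by rintro ((_ | _) | (_ | _)) <;> rfl
  map_rel_iff' := by
    rintro (_ | _ | i | i) (_ | _ | j | j) <;> simp [biadjGraph, starRel, TkGraph, eq_comm]

theorem nonempty_biadjGraph_starRel_iso_tkGraph [Finite ι] {k : ℕ} (c : ι)
    (h : Nat.card ι = k + 1) : Nonempty (biadjGraph (starRel c) ≃g TkGraph k) := by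
  classical
  have hcard : Nat.card ι = Nat.card (Option (Fin k)) := by simp [h]
  obtain ⟨e⟩ := Finite.card_eq.mp hcard
  let e' := e.trans (Equiv.swap (e c) none)
  exact ⟨(starRelIso e' (Equiv.swap_apply_left (e c) none)).trans (tkGraphIso k).symm⟩

theorem nonempty_biadjGraph_iso_tkGraph [Finite ι] {D : ι → ι → Prop} [Std.Refl D]
    (hconn : (biadjGraph D).Connected)
    (h : numMaxIndepSets (biadjGraph D) = 2 ^ (indepN (biadjGraph D) - 1) + 1) :
    Nonempty (biadjGraph D ≃g TkGraph (indepN (biadjGraph D) - 1)) := by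
  have : Nonempty ι := hconn.nonempty.elim fun v => v.elim Nonempty.intro Nonempty.intro
  have hcard : Nat.card ι = Nat.card ι - 1 + 1 := (Nat.sub_add_cancel Nat.card_pos).symm
  rw [numMaxIndepSets_biadjGraph, indepN_biadjGraph,
    ncard_relClosed_eq_iff_exists_starRel
      (isWeaklyConnected_of_connected_biadjGraph hconn)] at h
  rw [indepN_biadjGraph]
  obtain ⟨c, rfl | rfl⟩ := h
  · exact nonempty_biadjGraph_starRel_iso_tkGraph c hcard
  · exact (nonempty_biadjGraph_starRel_iso_tkGraph c hcard).map (biadjGraphFlipIso _).trans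

theorem numMaxIndepSets_tkGraph (k : ℕ) : numMaxIndepSets (TkGraph k) = 2 ^ k + 1 := by
  let c : Option (Fin k) := none
  have hstar := (ncard_relClosed_eq_iff_exists_starRel (isWeaklyConnected_starRel c)).mpr
    ⟨c, Or.inl rfl⟩
  rw [numMaxIndepSets_congr (tkGraphIso k), numMaxIndepSets_biadjGraph, hstar]
  simp

end Isomorphism

section PerfectMatching

variable {V : Type*} {G : SimpleGraph V}

theorem exists_indepSetOf_compl (hG : G.IsBipartite) :
    ∃ A, IndepSetOf G A ∧ IndepSetOf G Aᶜ := by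
  obtain ⟨C⟩ := hG
  exact ⟨C.colorClass 0, C.isIndepSet_colorClass 0,
    IndepSetOf.mono (C.isIndepSet_colorClass 1) fun v hv => Fin.eq_one_of_ne_zero (C v) hv⟩

theorem IndepSetOf.ncard_le_ncard_neighbors [Finite V] {A X : Set V} (hA : IndepSetOf G A)
    (hAc : MaxIndepSet G Aᶜ) (hX : X ⊆ A) :
    X.ncard ≤ {w | w ∉ A ∧ ∃ v ∈ X, G.Adj v w}.ncard := by
  set N := {w | w ∉ A ∧ ∃ v ∈ X, G.Adj v w}
  have hNA : N ⊆ Aᶜ := fun w hw => hw.1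
  have hind : IndepSetOf G (X ∪ Aᶜ \ N) :=
    indepSetOf_union (hA.mono hX) (hAc.1.mono Set.sdiff_subset)
      fun v hv w hw hvw => hw.2 ⟨hw.1, v, hv, hvw⟩
  have hdisj : Disjoint X (Aᶜ \ N) :=
    Set.disjoint_left.mpr fun v hv hv' => hv'.1 (hX hv)
  have hle := hind.ncard_le_indepN
  rw [Set.ncard_union_eq hdisj, ← hAc.2, ← Set.ncard_sdiff_add_ncard_of_subset hNA] at hle
  omega

theorem IndepSetOf.exists_injective_adj [Finite V] {A : Set V} (hA : IndepSetOf G A)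
    (hAc : MaxIndepSet G Aᶜ) :
    ∃ f : A → (Aᶜ : Set V), f.Injective ∧ ∀ a : A, G.Adj a (f a) := by
  classical
  have := Fintype.ofFinite V
  refine (Fintype.all_card_le_filter_rel_iff_exists_injective
    fun (a : A) (b : (Aᶜ : Set V)) => G.Adj a b).mp fun X => ?_
  have hall := hA.ncard_le_ncard_neighbors hAc (X := Subtype.val '' (X : Set A)) (by simp)
  rw [Set.ncard_image_of_injective _ Subtype.val_injective, Set.ncard_coe_finset] at hall
  rw [← Set.ncard_coe_finset {b | _}, ← Set.ncard_image_of_injective _ Subtype.val_injective]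
  refine hall.trans (Set.ncard_le_ncard ?_)
  rintro w ⟨hw, _, ⟨a, ha, rfl⟩, haw⟩
  exact ⟨⟨w, hw⟩, by simpa using ⟨a, ⟨a.2, ha⟩, haw⟩, rfl⟩

theorem IndepSetOf.exists_equiv_adj [Finite V] {A : Set V} (hA : IndepSetOf G A)
    (hAc : IndepSetOf G Aᶜ) (hcard : 2 * indepN G ≤ Nat.card V) :
    ∃ f : A ≃ (Aᶜ : Set V), ∀ a : A, G.Adj a (f a) := by
  have hA_le := hA.ncard_le_indepN
  have hAc_le := hAc.ncard_le_indepN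
  have hsum := Set.ncard_add_ncard_compl A
  obtain ⟨f, hinj, hf⟩ := hA.exists_injective_adj ⟨hAc, by omega⟩
  have hbij : f.Bijective := hinj.bijective_of_nat_card_le (by
    rw [Nat.card_coe_set_eq, Nat.card_coe_set_eq]
    omega)
  exact ⟨Equiv.ofBijective f hbij, hf⟩

theorem IndepSetOf.nonempty_iso_biadjGraph {κ : Type*} {A : Set V} (hA : IndepSetOf G A)
    (hAc : IndepSetOf G Aᶜ) (f : κ ≃ (Aᶜ : Set V)) :
    Nonempty (G ≃g biadjGraph fun (a : A) (b : κ) => G.Adj a (f b)) := by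
  classical
  let e : A ⊕ κ ≃ V := (Equiv.sumCongr (Equiv.refl A) f).trans (Equiv.Set.sumCompl A)
  refine ⟨RelIso.symm ⟨e, ?_⟩⟩
  rintro (a | a) (b | b)
  · exact iff_of_false (hA.not_adj a.2 b.2) id
  · exact Iff.rfl
  · exact G.adj_comm _ _
  · exact iff_of_false (hAc.not_adj (f a).2 (f b).2) id

theorem exists_iso_biadjGraph [Finite V] (hG : G.IsBipartite)
    (hcard : 2 * indepN G ≤ Nat.card V) :
    ∃ (A : Set V) (D : A → A → Prop), Std.Refl D ∧ Nonempty (G ≃g biadjGraph D) := by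
  obtain ⟨A, hA, hAc⟩ := exists_indepSetOf_compl hG
  obtain ⟨f, hf⟩ := hA.exists_equiv_adj hAc hcard
  exact ⟨A, fun a b => G.Adj a (f b), ⟨hf⟩, hA.nonempty_iso_biadjGraph hAc f⟩

end PerfectMatching

theorem tree_numMaxIndepSets_eq_iff_general {V : Type*} [Finite V] (G : SimpleGraph V) (α : ℕ)
    (hconn : G.Connected) (hbip : G.IsBipartite) (hα : indepN G = α) :
    numMaxIndepSets G = 2 ^ (α - 1) + 1 ↔ Nonempty (G ≃g TkGraph (α - 1)) := by
  subst hα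
  constructor
  · intro h
    obtain ⟨A, D, hD, ⟨e⟩⟩ :=
      exists_iso_biadjGraph hbip (two_mul_indepN_le_card_of_two_pow_lt (by omega))
    rw [numMaxIndepSets_congr e, indepN_congr e] at h
    rw [indepN_congr e]
    exact (nonempty_biadjGraph_iso_tkGraph (e.connected_iff.mp hconn) h).map e.trans
  · rintro ⟨e⟩
    rw [numMaxIndepSets_congr e, numMaxIndepSets_tkGraph]

/-- a tree `T` with independence number `α` has exactly `2^(α-1) + 1`
maximum independent sets if and only if `T` is isomorphic to `T(α-1)`, the tree
obtained from a star of order `α+1` by subdividing `α-1` of its edges once. -/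
theorem tree_numMaxIndepSets_eq_iff {V : Type*} [Fintype V] (T : SimpleGraph V) (α : ℕ)
    (hT : T.IsTree) (hα : indepN T = α) :
    numMaxIndepSets T = 2 ^ (α - 1) + 1 ↔ Nonempty (T ≃g TkGraph (α - 1)) := by
  exact tree_numMaxIndepSets_eq_iff_general T α hT.connected hT.isBipartite hα
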